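/- arXiv:1002.2816 — 6 statements merged into one kernel-verified Lean document; each statement's English description precedes it below -/
import Mathlib

section
/- Let F be the 2×2 complex matrix [[1/φ, 1/√φ], [1/√φ, −1/φ]] and R the diagonal matrix diag(e^{4πi/5}, e^{−3πi/5}). Set B₁ = R and B₂ = F·R·F. Then B₁ and B₂ are unitary and satisfy the braid relation B₁·B₂·B₁ = B₂·B₁·B₂; hence σ₁ ↦ B₁, σ₂ ↦ B₂ defines a unitary representation of the braid group on three strands (the braid representation on three Fibonacci anyons of total charge τ). -/
noncomputable section

open Complex

/-- The golden ratio φ = (1+√5)/2. -/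
def φ : ℝ := (1 + Real.sqrt 5) / 2

/-- The Fibonacci F-matrix (as a complex matrix). -/
def Fmat : Matrix (Fin 2) (Fin 2) ℂ :=
  !![(1 / φ : ℝ), (1 / Real.sqrt φ : ℝ); (1 / Real.sqrt φ : ℝ), (-(1 / φ) : ℝ)]

/-- The Fibonacci R-matrix diag(e^{4πi/5}, e^{−3πi/5}). -/
def Rmat : Matrix (Fin 2) (Fin 2) ℂ :=
  !![Complex.exp (4 * Real.pi * Complex.I / 5), 0;
     0, Complex.exp (-(3 * Real.pi * Complex.I) / 5)]

/-- The braid generator B₁ = R. -/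
def B₁ : Matrix (Fin 2) (Fin 2) ℂ := Rmat

/-- The braid generator B₂ = F·R·F. -/
def B₂ : Matrix (Fin 2) (Fin 2) ℂ := Fmat * Rmat * Fmat

theorem fib_w : ∃ w : ℂ, ∃ b : ℝ, w ^ 4 - w ^ 3 + w ^ 2 - w + 1 = 0 ∧ (b : ℂ) ^ 2 = w ^ 2 - w ^ 3 ∧
    Fmat = !![(b : ℂ) ^ 2, (b : ℂ); (b : ℂ), -(b : ℂ) ^ 2] ∧ Rmat = !![w ^ 4, 0; 0, -w ^ 2] := by
  have h5 : Real.sqrt 5 ^ 2 = 5 := Real.sq_sqrt (by norm_num)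
  have hs : 0 ≤ Real.sqrt 5 := Real.sqrt_nonneg 5
  have hp : 0 < φ := by unfold φ; positivity
  have hφ : φ ^ 2 = φ + 1 := by unfold φ; nlinarith
  have hb : (1 / Real.sqrt φ) ^ 2 = 1 / φ := by
    rw [div_pow, Real.sq_sqrt hp.le, one_pow]
  have hinv : 1 / φ = φ - 1 := by
    field_simp
    linarith
  have hw5 : Complex.exp (Real.pi * I / 5) ^ 5 = -1 := by
    rw [← Complex.exp_nat_mul, ← Complex.exp_pi_mul_I]
    congr 1
    push_cast
    ring
  have hc : (φ : ℂ) = Complex.exp (Real.pi * I / 5) + Complex.exp (-(Real.pi * I / 5)) := by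
    have h1 : φ = 2 * Real.cos (Real.pi / 5) := by
      rw [Real.cos_pi_div_five]; unfold φ; ring
    rw [h1]
    push_cast
    rw [Complex.two_cos]
    congr 2 <;> ring
  have hmul : Complex.exp (Real.pi * I / 5) * Complex.exp (-(Real.pi * I / 5)) = 1 := by
    rw [← Complex.exp_add]; simp
  have hR1 : Complex.exp (4 * Real.pi * I / 5) = Complex.exp (Real.pi * I / 5) ^ 4 := by
    rw [← Complex.exp_nat_mul]
    congr 1
    push_cast
    ring
  have hR2 : Complex.exp (-(3 * Real.pi * I) / 5) = Complex.exp (-(Real.pi * I / 5)) ^ 3 := by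
    rw [← Complex.exp_nat_mul]
    congr 1
    push_cast
    ring
  have hφc : (φ : ℂ) ^ 2 = φ + 1 := by exact_mod_cast hφ
  have hbc : ((1 / Real.sqrt φ : ℝ) : ℂ) ^ 2 = φ - 1 := by
    rw [← Complex.ofReal_pow, hb, hinv]; push_cast; ring
  have hac : ((1 / φ : ℝ) : ℂ) = φ - 1 := by rw [hinv]; push_cast; ring
  have hnac : ((-(1 / φ) : ℝ) : ℂ) = -(φ - 1) := by rw [hinv]; push_cast; ring
  refine ⟨Complex.exp (Real.pi * I / 5), 1 / Real.sqrt φ, ?_, ?_, ?_, ?_⟩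
  · generalize Complex.exp (Real.pi * I / 5) = w at *
    generalize Complex.exp (-(Real.pi * I / 5)) = v at *
    grind
  · rw [hbc]
    generalize Complex.exp (Real.pi * I / 5) = w at *
    generalize Complex.exp (-(Real.pi * I / 5)) = v at *
    grind
  · rw [hbc, Fmat, hac, hnac]
  · rw [Rmat, hR1, hR2]
    have : Complex.exp (-(Real.pi * I / 5)) ^ 3 = - Complex.exp (Real.pi * I / 5) ^ 2 := by
      generalize Complex.exp (Real.pi * I / 5) = w at *
      generalize Complex.exp (-(Real.pi * I / 5)) = v at *
      grind
    rw [this]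

theorem Rmat_unitary : Rmat ∈ Matrix.unitaryGroup (Fin 2) ℂ := by
  rw [Matrix.mem_unitaryGroup_iff]
  ext i j
  fin_cases i <;> fin_cases j <;>
    simp [Rmat, Matrix.mul_apply, Matrix.star_apply, ← Complex.exp_conj, ← Complex.exp_add, map_ofNat]
  · ring_nf; simp
  · ring_nf; simp

theorem Fmat_unitary : Fmat ∈ Matrix.unitaryGroup (Fin 2) ℂ := by
  obtain ⟨w, b, hw, hb, hF, -⟩ := fib_w
  have h1 : (b : ℂ) ^ 4 + (b : ℂ) ^ 2 = 1 := by grind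
  rw [Matrix.mem_unitaryGroup_iff, hF]
  ext i j
  fin_cases i <;> fin_cases j <;>
    simp [Matrix.mul_apply, Matrix.star_apply] <;> first | ring1 | linear_combination h1

/-- B₁ and B₂ are unitary and satisfy the braid relation
B₁·B₂·B₁ = B₂·B₁·B₂, hence σ₁ ↦ B₁, σ₂ ↦ B₂ defines a unitary
representation of the braid group on three strands. -/
theorem fib_braid_representation :
    B₁ ∈ Matrix.unitaryGroup (Fin 2) ℂ ∧
    B₂ ∈ Matrix.unitaryGroup (Fin 2) ℂ ∧
    B₁ * B₂ * B₁ = B₂ * B₁ * B₂ := by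
  refine ⟨Rmat_unitary, mul_mem (mul_mem Fmat_unitary Rmat_unitary) Fmat_unitary, ?_⟩
  obtain ⟨w, b, hw, hb, hF, hR⟩ := fib_w
  rw [B₁, B₂, hF, hR]
  generalize (b : ℂ) = c at *
  ext i j
  fin_cases i <;> fin_cases j <;> simp [Matrix.mul_apply] <;> grind

end
end

section
/- Equip ℂ³ with the Hermitian sesquilinear form ⟨u, v⟩ = Σ_{a,b} conj(u_a)·G_{ab}·v_b, where G = [[1, 0, 0], [0, 1, 1/φ], [0, 1/φ, 1]]. Let ω = e^{iπ/5} and define v₁ = 5^{1/4}·(1+φ²)^{−1}·(φ, 1, 1), v₂ = (1+φ²)^{−1/2}·(1, φω^{−3}, φω^{3}), v₃ = (1+φ²)^{−1/2}·(1, φω^{3}, φω^{−3}). Then ⟨v_a, v_b⟩ = 1 if a = b and 0 otherwise; i.e., v₁, v₂, v₃ form an orthonormal basis of ℂ³ for this inner product. -/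
noncomputable section

open Complex

/-- The Gram matrix of the ribbon-graph basis states ttI, S, S† of H^{(1,1)}. -/
def G : Matrix (Fin 3) (Fin 3) ℂ :=
  !![1, 0, 0; 0, 1, (1 / φ : ℝ); 0, (1 / φ : ℝ), 1]

/-- The Hermitian sesquilinear form with Gram matrix `G`. -/
def form (u v : Fin 3 → ℂ) : ℂ :=
  ∑ a : Fin 3, ∑ b : Fin 3, (starRingEnd ℂ) (u a) * G a b * v b

/-- ω = e^{iπ/5}. -/
def ω : ℂ := Complex.exp (Real.pi * Complex.I / 5)

/-- The coefficient vectors of the anyonic fusion basis states τ⊗τ, 1⊗τ, τ⊗1 of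
H^{(1,1)} in the ribbon-graph basis. -/
def v : Fin 3 → (Fin 3 → ℂ) :=
  ![(((5 : ℝ) ^ ((1 : ℝ)/4) * (1 + φ ^ 2)⁻¹ : ℝ) : ℂ) • ![(φ : ℂ), 1, 1],
    ((((Real.sqrt (1 + φ ^ 2))⁻¹ : ℝ)) : ℂ) • ![1, (φ : ℂ) * ω ^ (-3 : ℤ), (φ : ℂ) * ω ^ (3 : ℤ)],
    ((((Real.sqrt (1 + φ ^ 2))⁻¹ : ℝ)) : ℂ) • ![1, (φ : ℂ) * ω ^ (3 : ℤ), (φ : ℂ) * ω ^ (-3 : ℤ)]]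

theorem phi_sq : φ ^ 2 = φ + 1 := by
  have h : Real.sqrt 5 ^ 2 = 5 := Real.sq_sqrt (by norm_num)
  unfold φ
  nlinarith

theorem phi_pos : 0 < φ := by unfold φ; positivity

theorem omega_conj : (starRingEnd ℂ) ω = ω⁻¹ := by
  unfold ω
  rw [← Complex.exp_conj, ← Complex.exp_neg]
  congr 1
  have h5 : (starRingEnd ℂ) 5 = 5 := map_ofNat _ 5
  simp [Complex.conj_ofReal, neg_div, h5]

theorem omega_add : ω + ω⁻¹ = (φ : ℂ) := by
  have h : ω + ω⁻¹ = 2 * Complex.cos ((Real.pi / 5 : ℝ) : ℂ) := by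
    unfold ω
    rw [← Complex.exp_neg, Complex.cos]
    push_cast
    ring_nf
  rw [h, ← Complex.ofReal_cos, Real.cos_pi_div_five]
  unfold φ
  push_cast
  ring

theorem quart_sq : ((5 : ℝ) ^ ((1 : ℝ)/4)) ^ 2 = 2 * φ - 1 := by
  rw [← Real.rpow_natCast, ← Real.rpow_mul (by norm_num)]
  unfold φ
  rw [Real.sqrt_eq_rpow]
  norm_num
  ring

/-- v₁, v₂, v₃ form an orthonormal basis of ℂ³ for the inner product defined by `G`. -/
theorem fib_anyon_basis_orthonormal :
    ∀ a b : Fin 3, form (v a) (v b) = if a = b then 1 else 0 := by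
  obtain ⟨q, hq⟩ : ∃ q, q = (5 : ℝ) ^ ((1 : ℝ)/4) := ⟨_, rfl⟩
  have hq2 : (q : ℂ) ^ 2 = 2 * (φ : ℂ) - 1 := by
    rw [hq]; exact_mod_cast quart_sq
  obtain ⟨s, hs⟩ : ∃ s, s = (Real.sqrt (1 + φ ^ 2))⁻¹ := ⟨_, rfl⟩
  have hs2 : (s : ℂ) ^ 2 * (φ + 2) = 1 := by
    have : s ^ 2 * (φ + 2) = 1 := by
      have hp := phi_pos
      rw [hs, inv_pow, Real.sq_sqrt (by positivity), phi_sq]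
      field_simp
      ring
    exact_mod_cast this
  obtain ⟨r, hr⟩ : ∃ r, r = (1 + φ ^ 2)⁻¹ := ⟨_, rfl⟩
  have hr2 : (r : ℂ) * (φ + 2) = 1 := by
    have : r * (φ + 2) = 1 := by
      have hp := phi_pos
      rw [hr, phi_sq]
      field_simp
      ring
    exact_mod_cast this
  have hf : (φ : ℂ) ^ 2 = φ + 1 := by exact_mod_cast phi_sq
  have hg : ((1 / φ : ℝ) : ℂ) = φ - 1 := by
    have : 1 / φ = φ - 1 := by
      have hp := phi_pos
      field_simp
      linarith [phi_sq]
    rw [this]; push_cast; rfl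
  have hw0 : ω ≠ 0 := Complex.exp_ne_zero _
  obtain ⟨z, hz⟩ : ∃ z, z = ω ^ (3 : ℤ) := ⟨_, rfl⟩
  obtain ⟨w, hw⟩ : ∃ w, w = ω ^ (-3 : ℤ) := ⟨_, rfl⟩
  have hzw : z * w = 1 := by
    rw [hz, hw, ← zpow_add₀ hw0]; norm_num
  have hcz : (starRingEnd ℂ) z = w := by
    rw [hz, hw, map_zpow₀, omega_conj, zpow_neg, inv_zpow]
  have hcw : (starRingEnd ℂ) w = z := by rw [← hcz, Complex.conj_conj]
  have hadd : z + w = 1 - φ := by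
    have h1 := omega_add
    have h2 : ω * ω⁻¹ = 1 := mul_inv_cancel₀ hw0
    have h3 : w = (ω⁻¹) ^ 3 := by
      rw [hw, zpow_neg, ← inv_zpow]; norm_cast
    have h4 : z = ω ^ 3 := by rw [hz]; norm_cast
    rw [h3, h4]
    generalize ω⁻¹ = y at *
    generalize (φ : ℂ) = f at *
    subst h1
    grind
  have hwe : w = 1 - φ - z := by linear_combination hadd
  intro a b
  fin_cases a <;> fin_cases b <;>
    simp [form, v, G, Fin.sum_univ_three, -one_div, -zpow_neg, -Complex.ofReal_inv, -Complex.ofReal_div, ← hq, ← hs, ← hr, ← hz, ← hw, hcz, hcw, hg, -Int.reduceNeg]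
  all_goals clear hz hw hq hs hr hcz hcw hg
  all_goals generalize (φ : ℂ) = f at *
  all_goals generalize (q : ℂ) = q at *
  all_goals generalize (r : ℂ) = r at *
  all_goals generalize (s : ℂ) = s at *
  all_goals grind

end
end

section
/- Suppose L is a finite type, δ : L → L → L → ℕ is invariant under all permutations of its three arguments, and d : L → ℝ satisfies d i · d j = Σ_k (δ i j k)·(d k) for all i, j. Then for every m ∈ L: Σ_{i,j} (d i)·(d j)·(δ i j m) = D²·(d m), where D² := Σ_i (d i)². -/
open Finset

/-- If `δ` is a fully symmetric fusion tensor and `d` satisfies the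
quantum-dimension identity, then Σ_{i,j} d_i d_j δ(i,j,m) = D² · d_m,
where D² = Σ_i d_i². -/
theorem quantum_dimension_vacuum_sum
    {L : Type*} [Fintype L] (δ : L → L → L → ℕ) (d : L → ℝ)
    (hswap : ∀ i j k, δ i j k = δ j i k)
    (hrot : ∀ i j k, δ i j k = δ i k j)
    (hdim : ∀ i j, d i * d j = ∑ k, (δ i j k : ℝ) * d k) :
    ∀ m : L, ∑ i : L, ∑ j : L, d i * d j * (δ i j m : ℝ) =
      (∑ i : L, d i ^ 2) * d m := by
  intro m
  rw [Finset.sum_mul]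
  refine Finset.sum_congr rfl fun i _ => ?_
  rw [pow_two, mul_assoc, hdim i m, Finset.mul_sum]
  refine Finset.sum_congr rfl fun j _ => ?_
  rw [hrot i j m]
  ring
end

section
/- Suppose L is a finite type and N : L → L → L → ℕ is commutative and associative. For a full binary tree T with leaves labeled by elements of L, define the fusion count c(T, k) ∈ ℕ recursively by c(leaf a, k) = 1 if a = k and 0 otherwise, and c(node T₁ T₂, k) = Σ_{ℓ₁,ℓ₂} c(T₁, ℓ₁)·c(T₂, ℓ₂)·(N ℓ₁ ℓ₂ k). Then c(T, k) depends only on the multiset of leaf labels of T: if two full binary trees T and T' have equal multisets of leaf labels, then c(T, k) = c(T', k) for every k ∈ L. (Hence the number of fusion-consistent labelings of a pants decomposition with given punctures and total charge is independent of the chosen decomposition.) -/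
open Finset

/-- Full binary trees with leaves labeled by `L`. -/
inductive LabeledTree (L : Type*) where
  | leaf : L → LabeledTree L
  | node : LabeledTree L → LabeledTree L → LabeledTree L

variable {L : Type*}

/-- The fusion count of a labeled full binary tree with total charge `k`. -/
def fusionCount [Fintype L] [DecidableEq L] (N : L → L → L → ℕ) :
    LabeledTree L → L → ℕ
  | .leaf a, k => if a = k then 1 else 0
  | .node t₁ t₂, k =>
      ∑ ℓ₁ : L, ∑ ℓ₂ : L, fusionCount N t₁ ℓ₁ * fusionCount N t₂ ℓ₂ * N ℓ₁ ℓ₂ k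

/-- The multiset of leaf labels of a tree. -/
def leafLabels : LabeledTree L → Multiset L
  | .leaf a => {a}
  | .node t₁ t₂ => leafLabels t₁ + leafLabels t₂

theorem tree_hom_eq {S : Type*} [CommSemigroup S] (f : LabeledTree L → S)
    (hf : ∀ a b, f (.node a b) = f a * f b) (T : LabeledTree L) :
    ((f T : S) : WithOne S) =
      ((leafLabels T).map (fun a => ((f (.leaf a) : S) : WithOne S))).prod := by
  induction T with
  | leaf a => simp [leafLabels]
  | node a b iha ihb =>
    rw [hf, WithOne.coe_mul, iha, ihb, leafLabels, Multiset.map_add, Multiset.prod_add]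

/-- The fusion product. -/
def fusionStar [Fintype L] (N : L → L → L → ℕ) (f g : L → ℕ) : L → ℕ :=
  fun k => ∑ a : L, ∑ b : L, f a * g b * N a b k

theorem fusionStar_comm [Fintype L] (N : L → L → L → ℕ)
    (hcomm : ∀ a b c, N a b c = N b a c) (f g : L → ℕ) :
    fusionStar N f g = fusionStar N g f := by
  funext k
  unfold fusionStar
  rw [Finset.sum_comm]
  refine Finset.sum_congr rfl fun a _ => Finset.sum_congr rfl fun b _ => ?_
  rw [hcomm b a, mul_comm (f b)]

theorem fusionStar_assoc [Fintype L] (N : L → L → L → ℕ)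
    (hassoc : ∀ i j k l, ∑ m, N i j m * N m k l = ∑ m, N j k m * N i m l)
    (f g h : L → ℕ) :
    fusionStar N (fusionStar N f g) h = fusionStar N f (fusionStar N g h) := by
  funext l
  have e1 : fusionStar N (fusionStar N f g) h l =
      ∑ i, ∑ j, ∑ k, f i * g j * h k * ∑ m, N i j m * N m k l := by
    simp only [fusionStar, Finset.sum_mul, Finset.mul_sum]
    calc _ = ∑ m, ∑ i, ∑ k, ∑ j, f i * g j * N i j m * h k * N m k l :=
          Finset.sum_congr rfl fun m _ => Finset.sum_comm
      _ = ∑ i, ∑ m, ∑ k, ∑ j, f i * g j * N i j m * h k * N m k l := Finset.sum_comm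
      _ = _ := by
        refine Finset.sum_congr rfl fun i _ => ?_
        calc _ = ∑ m, ∑ j, ∑ k, f i * g j * N i j m * h k * N m k l :=
              Finset.sum_congr rfl fun m _ => Finset.sum_comm
          _ = ∑ j, ∑ m, ∑ k, f i * g j * N i j m * h k * N m k l := Finset.sum_comm
          _ = _ := by
            refine Finset.sum_congr rfl fun j _ => ?_
            rw [Finset.sum_comm]
            refine Finset.sum_congr rfl fun k _ => Finset.sum_congr rfl fun m _ => ?_
            ring
  have e2 : fusionStar N f (fusionStar N g h) l =
      ∑ i, ∑ j, ∑ k, f i * g j * h k * ∑ m, N j k m * N i m l := by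
    simp only [fusionStar, Finset.sum_mul, Finset.mul_sum]
    refine Finset.sum_congr rfl fun i _ => ?_
    rw [Finset.sum_comm]
    refine Finset.sum_congr rfl fun j _ => ?_
    rw [Finset.sum_comm]
    refine Finset.sum_congr rfl fun k _ => Finset.sum_congr rfl fun m _ => ?_
    ring
  rw [e1, e2]
  simp only [hassoc]

/-- For a commutative, associative fusion-multiplicity tensor, the fusion
count of a tree depends only on the multiset of its leaf labels: the number
of fusion-consistent labelings of a pants decomposition with given punctures
and total charge is independent of the chosen decomposition. -/
theorem fusionCount_eq_of_leafLabels_eq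
    [Fintype L] [DecidableEq L] (N : L → L → L → ℕ)
    (hcomm : ∀ a b c, N a b c = N b a c)
    (hassoc : ∀ i j k l, ∑ m, N i j m * N m k l = ∑ m, N j k m * N i m l)
    (T T' : LabeledTree L) (h : leafLabels T = leafLabels T') :
    ∀ k : L, fusionCount N T k = fusionCount N T' k := by
  let I : CommSemigroup (L → ℕ) :=
    { mul := fusionStar N
      mul_assoc := fusionStar_assoc N hassoc
      mul_comm := fusionStar_comm N hcomm }
  have key := @tree_hom_eq L (L → ℕ) I (fusionCount N)
    (fun a b => by funext k; rw [fusionCount]; rfl)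
  have e := (key T).trans ((by rw [h] : _ = _).trans (key T').symm)
  exact fun k => congrFun (WithOne.coe_inj.1 e) k
end

section
/- The Fibonacci F-symbols satisfy the pentagon identity: for all labels m, ℓ, q, k, p, j, i, s, r ∈ {1, τ}, Σ_n F^{mℓq}_{kpn} · F^{jip}_{mns} · F^{jsn}_{ℓkr} = F^{jip}_{qkr} · F^{riq}_{mℓs}, where the sum runs over n ∈ {1, τ}. -/
noncomputable section

/-- A triple of Fibonacci labels (`false` = 1, `true` = τ) is admissible iff
the number of τ's among them is not exactly one. -/
def admissible (a b c : Bool) : Prop :=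
  ((if a then 1 else 0) + (if b then 1 else 0) + (if c then 1 else 0) : ℕ) ≠ 1

instance : ∀ a b c : Bool, Decidable (admissible a b c) := by
  intro a b c; unfold admissible; infer_instance

/-- The nontrivial 2×2 block of the Fibonacci F-move, indexed by labels. -/
def Mblock (m n : Bool) : ℝ :=
  if m then (if n then -(1 / φ) else 1 / Real.sqrt φ)
  else (if n then 1 / Real.sqrt φ else 1 / φ)

/-- The Fibonacci F-symbol F^{ijm}_{kℓn}. -/
def Fs (i j m k l n : Bool) : ℝ :=
  if admissible i j m ∧ admissible k l m ∧ admissible i l n ∧ admissible j k n then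
    (if i = true ∧ j = true ∧ k = true ∧ l = true then Mblock m n else 1)
  else 0

end

theorem fib_aux : ∃ a : ℝ, 1 / Real.sqrt φ = a ∧ 1 / φ = a ^ 2 ∧ a ^ 4 = 1 - a ^ 2 := by
  have h5 : Real.sqrt 5 ^ 2 = 5 := Real.sq_sqrt (by norm_num)
  have hpos : 0 < φ := by unfold φ; positivity
  have hφ : φ ^ 2 = φ + 1 := by unfold φ; nlinarith
  have hs : Real.sqrt φ ^ 2 = φ := Real.sq_sqrt hpos.le
  have e : (1 / Real.sqrt φ) ^ 2 = 1 / φ := by rw [div_pow, hs, one_pow]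
  refine ⟨_, rfl, e.symm, ?_⟩
  have : (1 / Real.sqrt φ) ^ 4 = ((1 / Real.sqrt φ) ^ 2) ^ 2 := by ring
  rw [this, e]
  field_simp
  linarith

/-- The Fibonacci F-symbols satisfy the pentagon identity. -/
theorem fib_pentagon (m l q k p j i s r : Bool) :
    ∑ n : Bool, Fs m l q k p n * Fs j i p m n s * Fs j s n l k r =
      Fs j i p q k r * Fs r i q m l s := by
  obtain ⟨a, h1, h2, h4⟩ := fib_aux
  rw [Fintype.sum_bool]
  unfold Fs Mblock
  rw [h1, h2]
  clear h1 h2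
  unfold admissible
  cases m <;> cases l <;> cases q <;> cases k <;> cases p <;> cases j <;> cases i <;>
    cases s <;> cases r <;> simp <;> grind
end

section
/- The Fibonacci F-symbols and R-symbols satisfy the hexagon identity: for all labels k, i, j, ℓ, m, g ∈ {1, τ}, R^{ki}_m · F^{kim}_{ℓjg} · R^{kj}_g = Σ_n F^{ikm}_{ℓjn} · R^{kn}_ℓ · F^{jin}_{ℓkg}, where the sum runs over n ∈ {1, τ}. -/
noncomputable section

/-- The Fibonacci R-symbol R^{ij}_k. -/
def Rs (i j k : Bool) : ℂ :=
  if i = true ∧ j = true then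
    (if k then Complex.exp (-(3 * Real.pi * Complex.I) / 5)
     else Complex.exp (4 * Real.pi * Complex.I / 5))
  else 1

theorem hex_params : ∃ z p q : ℂ, Complex.exp (4 * Real.pi * Complex.I / 5) = z ^ 4 ∧
    Complex.exp (-(3 * Real.pi * Complex.I) / 5) = - z ^ 2 ∧
    ((φ⁻¹ : ℝ) : ℂ) = p ∧ (((Real.sqrt φ)⁻¹ : ℝ) : ℂ) = q ∧ q ^ 2 = p ∧
    z ^ 4 = z ^ 3 - z ^ 2 + z - 1 ∧ p = z ^ 2 - z ^ 3 := by
  have hφ : 0 < φ := by unfold φ; positivity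
  have h5 : Real.sqrt 5 ^ 2 = 5 := Real.sq_sqrt (by norm_num)
  have hφ2 : φ ^ 2 = φ + 1 := by unfold φ; nlinarith
  have hinv : φ⁻¹ = φ - 1 := by
    field_simp
    linarith
  have hz5 : Complex.exp (Real.pi * Complex.I / 5) ^ 5 = -1 := by
    rw [← Complex.exp_nat_mul, ← Complex.exp_pi_mul_I]
    congr 1
    push_cast
    ring
  have hz0 : Complex.exp (Real.pi * Complex.I / 5) ≠ 0 := Complex.exp_ne_zero _
  have hcos : (φ : ℂ) = Complex.exp (Real.pi * Complex.I / 5)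
      + (Complex.exp (Real.pi * Complex.I / 5))⁻¹ := by
    have h1 : φ = 2 * Real.cos (Real.pi / 5) := by
      rw [Real.cos_pi_div_five]; unfold φ; ring
    rw [h1, ← Complex.exp_neg]
    push_cast
    rw [Complex.two_cos]
    congr 2 <;> ring
  have h4 : Complex.exp (4 * Real.pi * Complex.I / 5)
      = Complex.exp (Real.pi * Complex.I / 5) ^ 4 := by
    rw [← Complex.exp_nat_mul]
    congr 1
    push_cast
    ring
  have h3 : Complex.exp (-(3 * Real.pi * Complex.I) / 5)
      * Complex.exp (Real.pi * Complex.I / 5) ^ 3 = 1 := by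
    rw [← Complex.exp_nat_mul, ← Complex.exp_add, ← Complex.exp_zero]
    congr 1
    push_cast
    ring
  have hφ2c : (φ : ℂ) ^ 2 = φ + 1 := by exact_mod_cast hφ2
  generalize Complex.exp (Real.pi * Complex.I / 5) = z at *
  have hzi : z⁻¹ = - z ^ 4 := by
    field_simp
    linear_combination hz5
  rw [hzi] at hcos
  have hmin : z ^ 4 = z ^ 3 - z ^ 2 + z - 1 := by
    rw [hcos] at hφ2c
    linear_combination hφ2c - (z ^ 3 - 2) * hz5
  refine ⟨z, _, _, h4, ?_, rfl, rfl, ?_, hmin, ?_⟩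
  · have : z ^ 3 ≠ 0 := pow_ne_zero _ hz0
    apply mul_right_cancel₀ this
    linear_combination h3 + hz5
  · rw [← Complex.ofReal_pow, inv_pow, Real.sq_sqrt hφ.le]
  · rw [hinv]
    push_cast
    rw [hcos]
    linear_combination -hmin

/-- The Fibonacci F- and R-symbols satisfy the hexagon identity. -/
theorem fib_hexagon (k i j l m g : Bool) :
    Rs k i m * (Fs k i m l j g : ℂ) * Rs k j g =
      ∑ n : Bool, (Fs i k m l j n : ℂ) * Rs k n l * (Fs j i n l k g : ℂ) := by
  obtain ⟨z, p, q, h4, h3, hp, hq, hqp, hz, hpz⟩ := hex_params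
  rw [Fintype.sum_bool]
  cases k <;> cases i <;> cases j <;> cases l <;> cases m <;> cases g <;>
    simp only [Fs, Rs, Mblock, admissible, h4, h3, one_div] <;>
    norm_num <;>
    (try simp only [← Complex.ofReal_inv, hp, hq]) <;>
    grind

end
end
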